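/- Let Ω ∈ ℝ^{p×p} be symmetric positive definite with Σ = Ω^{-1}, let Σ̂ ∈ ℝ^{p×p} be symmetric, fix i ∈ {1,…,p}, and set β* = Ω e_i (so Σβ* = e_i). Suppose λ ≥ 3‖Ω‖_{L1}‖Σ̂ − Σ‖_∞ and β̂ is a global minimizer over ℝ^p of β ↦ (1/2)βᵀΣ̂β − e_iᵀβ + λ|β|_1. Then, with h = β* − β̂, one has |h|_∞ ≤ (1/3)λ|h|_1 + (4/3)‖Ω‖_{L1}λ. -/

import Mathlib

/-!
Write `D = Σ̂ - Ω⁻¹`, with any vector `e` in place of `e_i`. The first-order condition at `β̂` says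
`|Σ̂ β̂ - e|_∞ ≤ λ`, and the error `h = Ω e - β̂` is an exact linear image of `D β̂` and this
residual:
`Ω e - β̂ = Ω (D β̂ - (Σ̂ β̂ - e))`.
The `ℓ1 → ℓ∞` bound for `D` and the `ℓ∞ → ℓ∞` bound for `Ω` give
`|h|_∞ ≤ ‖Ω‖_{L1} (‖D‖_∞ |β̂|_1 + λ)`; now split `|β̂|_1 ≤ |h|_1 + ‖Ω‖_{L1} |e|_1` and use
`‖Ω‖_{L1} ‖D‖_∞ ≤ λ / 3`.
-/

open Matrix
open scoped BigOperators

/-- The ℓ1 norm of a vector in ℝ^p. -/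
noncomputable def vecL1 {p : ℕ} (a : Fin p → ℝ) : ℝ := ∑ i, |a i|

/-- The ℓ∞ norm of a vector in ℝ^p. -/
noncomputable def vecLinf {p : ℕ} (a : Fin p → ℝ) : ℝ := ⨆ i, |a i|

/-- The entrywise supremum norm of a p×p matrix. -/
noncomputable def matLinf {p : ℕ} (A : Matrix (Fin p) (Fin p) ℝ) : ℝ := ⨆ i, ⨆ j, |A i j|

/-- The maximum absolute column-sum norm of a p×p matrix. -/
noncomputable def matL1 {p : ℕ} (A : Matrix (Fin p) (Fin p) ℝ) : ℝ := ⨆ j, ∑ i, |A i j|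

/-- The SCIO objective function β ↦ (1/2)βᵀ Σ̂ β − eᵀβ + λ|β|₁. -/
noncomputable def scioObj {p : ℕ} (S : Matrix (Fin p) (Fin p) ℝ) (e : Fin p → ℝ)
    (lam : ℝ) (β : Fin p → ℝ) : ℝ :=
  (1 / 2) * (β ⬝ᵥ S.mulVec β) - e ⬝ᵥ β + lam * vecL1 β

open Filter Topology

section Norms

variable {p : ℕ}

lemma vecL1_nonneg (a : Fin p → ℝ) : 0 ≤ vecL1 a :=
  Finset.sum_nonneg fun _ _ => abs_nonneg _

lemma vecL1_add_le (a b : Fin p → ℝ) : vecL1 (a + b) ≤ vecL1 a + vecL1 b :=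
  (Finset.sum_le_sum fun k _ => abs_add_le (a k) (b k)).trans_eq Finset.sum_add_distrib

lemma vecL1_sub_le (a b : Fin p → ℝ) : vecL1 (a - b) ≤ vecL1 a + vecL1 b :=
  (Finset.sum_le_sum fun k _ => abs_sub (a k) (b k)).trans_eq Finset.sum_add_distrib

lemma vecL1_smul (t : ℝ) (a : Fin p → ℝ) : vecL1 (t • a) = |t| * vecL1 a := by
  simp only [vecL1, Pi.smul_apply, smul_eq_mul, abs_mul, Finset.mul_sum]

lemma vecL1_single (j : Fin p) (t : ℝ) : vecL1 (Pi.single j t) = |t| := by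
  simp only [vecL1, Pi.single_apply, apply_ite abs, abs_zero, Finset.sum_ite_eq', Finset.mem_univ,
    if_true]

lemma abs_apply_le_vecLinf (a : Fin p → ℝ) (k : Fin p) : |a k| ≤ vecLinf a :=
  le_ciSup (f := fun k => |a k|) (Finite.bddAbove_range _) k

lemma vecLinf_le {a : Fin p → ℝ} {c : ℝ} (hc : 0 ≤ c) (ha : ∀ k, |a k| ≤ c) : vecLinf a ≤ c :=
  Real.iSup_le ha hc

lemma vecLinf_nonneg (a : Fin p → ℝ) : 0 ≤ vecLinf a :=
  Real.iSup_nonneg fun _ => abs_nonneg _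

lemma vecLinf_sub_le (a b : Fin p → ℝ) : vecLinf (a - b) ≤ vecLinf a + vecLinf b :=
  vecLinf_le (add_nonneg (vecLinf_nonneg a) (vecLinf_nonneg b)) fun k =>
    (abs_sub (a k) (b k)).trans (add_le_add (abs_apply_le_vecLinf a k) (abs_apply_le_vecLinf b k))

lemma abs_dotProduct_le_vecL1_mul_vecLinf (a b : Fin p → ℝ) : |a ⬝ᵥ b| ≤ vecL1 a * vecLinf b :=
  calc |a ⬝ᵥ b| ≤ ∑ k, |a k * b k| := Finset.abs_sum_le_sum_abs _ _
    _ = ∑ k, |a k| * |b k| := by simp only [abs_mul]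
    _ ≤ ∑ k, |a k| * vecLinf b := by gcongr with k; exact abs_apply_le_vecLinf b k
    _ = vecL1 a * vecLinf b := (Finset.sum_mul ..).symm

variable (A : Matrix (Fin p) (Fin p) ℝ)

lemma matLinf_nonneg : 0 ≤ matLinf A :=
  Real.iSup_nonneg fun _ => Real.iSup_nonneg fun _ => abs_nonneg _

lemma vecLinf_row_le_matLinf (j : Fin p) : vecLinf (A j) ≤ matLinf A :=
  le_ciSup (f := fun j => vecLinf (A j)) (Finite.bddAbove_range _) j

lemma matL1_nonneg : 0 ≤ matL1 A :=
  Real.iSup_nonneg fun j => vecL1_nonneg (Aᵀ j)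

lemma vecL1_col_le_matL1 (j : Fin p) : vecL1 (Aᵀ j) ≤ matL1 A :=
  le_ciSup (f := fun j => vecL1 (Aᵀ j)) (Finite.bddAbove_range _) j

lemma vecLinf_mulVec_le_matLinf_mul_vecL1 (v : Fin p → ℝ) :
    vecLinf (A *ᵥ v) ≤ matLinf A * vecL1 v := by
  refine vecLinf_le (mul_nonneg (matLinf_nonneg A) (vecL1_nonneg v)) fun j => ?_
  calc |A j ⬝ᵥ v| = |v ⬝ᵥ A j| := by rw [dotProduct_comm]
    _ ≤ vecL1 v * vecLinf (A j) := abs_dotProduct_le_vecL1_mul_vecLinf v (A j)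
    _ ≤ vecL1 v * matLinf A :=
      mul_le_mul_of_nonneg_left (vecLinf_row_le_matLinf A j) (vecL1_nonneg v)
    _ = matLinf A * vecL1 v := mul_comm _ _

lemma vecLinf_mulVec_le_matL1_transpose_mul_vecLinf (v : Fin p → ℝ) :
    vecLinf (A *ᵥ v) ≤ matL1 Aᵀ * vecLinf v :=
  vecLinf_le (mul_nonneg (matL1_nonneg Aᵀ) (vecLinf_nonneg v)) fun j =>
    (abs_dotProduct_le_vecL1_mul_vecLinf (A j) v).trans
      (mul_le_mul_of_nonneg_right (vecL1_col_le_matL1 Aᵀ j) (vecLinf_nonneg v))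

lemma vecL1_mulVec_le_matL1_mul_vecL1 (v : Fin p → ℝ) : vecL1 (A *ᵥ v) ≤ matL1 A * vecL1 v :=
  calc vecL1 (A *ᵥ v) ≤ ∑ j, ∑ k, |A j k * v k| :=
        Finset.sum_le_sum fun j _ => Finset.abs_sum_le_sum_abs (fun k => A j k * v k) Finset.univ
    _ = ∑ k, vecL1 (Aᵀ k) * |v k| := by
      rw [Finset.sum_comm]
      simp only [abs_mul, vecL1, transpose_apply, Finset.sum_mul]
    _ ≤ ∑ k, matL1 A * |v k| := by gcongr with k; exact vecL1_col_le_matL1 A k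
    _ = matL1 A * vecL1 v := (Finset.mul_sum ..).symm

end Norms

section FirstOrderCondition

variable {p : ℕ} {S : Matrix (Fin p) (Fin p) ℝ} {lam : ℝ}

lemma scioObj_add_smul_le (hS : S.IsSymm) (hlam : 0 ≤ lam) (e β v : Fin p → ℝ) {t : ℝ}
    (ht : 0 ≤ t) :
    scioObj S e lam (β + t • v) ≤
      scioObj S e lam β + t * (v ⬝ᵥ (S *ᵥ β - e) + lam * vecL1 v + t * (v ⬝ᵥ S *ᵥ v / 2)) := by
  have hcross : β ⬝ᵥ S *ᵥ v = v ⬝ᵥ S *ᵥ β := by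
    rw [dotProduct_mulVec, ← mulVec_transpose, hS.eq, dotProduct_comm]
  have hL1 : lam * vecL1 (β + t • v) ≤ lam * (vecL1 β + t * vecL1 v) := by
    refine mul_le_mul_of_nonneg_left ((vecL1_add_le β (t • v)).trans_eq ?_) hlam
    rw [vecL1_smul, abs_of_nonneg ht]
  simp only [scioObj, mulVec_add, mulVec_smul, dotProduct_add, add_dotProduct, dotProduct_smul,
    smul_dotProduct, dotProduct_sub, smul_eq_mul, hcross, dotProduct_comm e v]
  linarith

lemma dotProduct_add_vecL1_nonneg_of_isLocalMin_scioObj (hS : S.IsSymm) (hlam : 0 ≤ lam)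
    {e β : Fin p → ℝ} (hmin : IsLocalMin (scioObj S e lam) β) (v : Fin p → ℝ) :
    0 ≤ v ⬝ᵥ (S *ᵥ β - e) + lam * vecL1 v := by
  set b := v ⬝ᵥ (S *ᵥ β - e) + lam * vecL1 v
  have hline : Tendsto (fun t : ℝ => β + t • v) (𝓝[>] 0) (𝓝 β) :=
    tendsto_nhdsWithin_of_tendsto_nhds <| Continuous.tendsto' (by fun_prop) _ _ (by simp)
  have hslope : Tendsto (fun t : ℝ => b + t * (v ⬝ᵥ S *ᵥ v / 2)) (𝓝[>] 0) (𝓝 b) :=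
    tendsto_nhdsWithin_of_tendsto_nhds <| Continuous.tendsto' (by fun_prop) _ _ (by simp)
  refine ge_of_tendsto hslope ?_
  filter_upwards [hline.eventually hmin, self_mem_nhdsWithin] with t hle (ht : 0 < t)
  have hupper := scioObj_add_smul_le hS hlam e β v ht.le
  exact nonneg_of_mul_nonneg_right (by linarith) ht

theorem vecLinf_mulVec_sub_le_of_isLocalMin_scioObj (hS : S.IsSymm) (hlam : 0 ≤ lam)
    {e β : Fin p → ℝ} (hmin : IsLocalMin (scioObj S e lam) β) :
    vecLinf (S *ᵥ β - e) ≤ lam := by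
  refine vecLinf_le hlam fun j => ?_
  have hdir (t : ℝ) : 0 ≤ t * (S *ᵥ β - e) j + lam * |t| := by
    simpa only [single_dotProduct, vecL1_single] using
      dotProduct_add_vecL1_nonneg_of_isLocalMin_scioObj hS hlam hmin (Pi.single j t)
  have hpos := hdir 1
  have hneg := hdir (-1)
  rw [abs_neg] at hneg
  rw [abs_one] at hpos hneg
  exact abs_le.2 ⟨by linarith, by linarith⟩

end FirstOrderCondition

section Error

variable {p : ℕ} {Ω : Matrix (Fin p) (Fin p) ℝ}

lemma vecLinf_mulVec_sub_le_matL1_transpose_mul (hΩ : IsUnit Ω.det)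
    (S : Matrix (Fin p) (Fin p) ℝ) (e β : Fin p → ℝ) :
    vecLinf (Ω *ᵥ e - β) ≤
      matL1 Ωᵀ * (matLinf (S - Ω⁻¹) * vecL1 β + vecLinf (S *ᵥ β - e)) := by
  have herror : Ω *ᵥ e - β = Ω *ᵥ ((S - Ω⁻¹) *ᵥ β - (S *ᵥ β - e)) := by
    rw [sub_mulVec, sub_sub_sub_cancel_left, mulVec_sub, mulVec_mulVec, mul_nonsing_inv _ hΩ,
      one_mulVec]
  calc vecLinf (Ω *ᵥ e - β) = vecLinf (Ω *ᵥ ((S - Ω⁻¹) *ᵥ β - (S *ᵥ β - e))) :=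
        congrArg vecLinf herror
    _ ≤ matL1 Ωᵀ * vecLinf ((S - Ω⁻¹) *ᵥ β - (S *ᵥ β - e)) :=
      vecLinf_mulVec_le_matL1_transpose_mul_vecLinf Ω _
    _ ≤ matL1 Ωᵀ * (matLinf (S - Ω⁻¹) * vecL1 β + vecLinf (S *ᵥ β - e)) := by
      refine mul_le_mul_of_nonneg_left ((vecLinf_sub_le _ _).trans ?_) (matL1_nonneg Ωᵀ)
      exact add_le_add_left (vecLinf_mulVec_le_matLinf_mul_vecL1 _ β) _

theorem scio_error_linf_via_l1_general (hΩsym : Ω.IsSymm) (hΩ : IsUnit Ω.det)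
    {S : Matrix (Fin p) (Fin p) ℝ} (hS : S.IsSymm) {lam : ℝ}
    (hlam : 3 * matL1 Ω * matLinf (S - Ω⁻¹) ≤ lam) {e β : Fin p → ℝ}
    (hmin : IsLocalMin (scioObj S e lam) β) :
    vecLinf (Ω *ᵥ e - β) ≤
      (1 / 3) * lam * vecL1 (Ω *ᵥ e - β) + (1 + vecL1 e / 3) * matL1 Ω * lam := by
  set h := Ω *ᵥ e - β with hh
  have hM := matL1_nonneg Ω
  have hlam_nonneg : 0 ≤ lam :=
    (mul_nonneg (mul_nonneg zero_le_three hM) (matLinf_nonneg (S - Ω⁻¹))).trans hlam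
  have hopt : vecLinf (S *ᵥ β - e) ≤ lam :=
    vecLinf_mulVec_sub_le_of_isLocalMin_scioObj hS hlam_nonneg hmin
  have hβ : vecL1 β ≤ matL1 Ω * vecL1 e + vecL1 h :=
    calc vecL1 β = vecL1 (Ω *ᵥ e - h) := by rw [hh, sub_sub_cancel]
      _ ≤ vecL1 (Ω *ᵥ e) + vecL1 h := vecL1_sub_le _ _
      _ ≤ matL1 Ω * vecL1 e + vecL1 h := by grw [vecL1_mulVec_le_matL1_mul_vecL1]
  calc vecLinf h ≤ matL1 Ω * (matLinf (S - Ω⁻¹) * vecL1 β + vecLinf (S *ᵥ β - e)) := by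
        simpa only [hΩsym.eq] using vecLinf_mulVec_sub_le_matL1_transpose_mul hΩ S e β
    _ ≤ matL1 Ω * (matLinf (S - Ω⁻¹) * vecL1 β + lam) := by gcongr
    _ = matL1 Ω * matLinf (S - Ω⁻¹) * vecL1 β + matL1 Ω * lam := by ring
    _ ≤ lam / 3 * (matL1 Ω * vecL1 e + vecL1 h) + matL1 Ω * lam := by
      have hprod : matL1 Ω * matLinf (S - Ω⁻¹) ≤ lam / 3 := by linarith
      gcongr
      exact vecL1_nonneg β
    _ = (1 / 3) * lam * vecL1 h + (1 + vecL1 e / 3) * matL1 Ω * lam := by ring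

end Error

/-- ℓ∞ bound on the error h = β* − β̂ for a SCIO column minimizer:
|h|_∞ ≤ (1/3)λ|h|₁ + (4/3)‖Ω‖_{L1}λ. -/
theorem scio_error_linf_via_l1 {p : ℕ}
    (Ω : Matrix (Fin p) (Fin p) ℝ) (hΩsym : Ω.IsSymm) (hΩpd : Ω.PosDef)
    (Shat : Matrix (Fin p) (Fin p) ℝ) (hSsym : Shat.IsSymm)
    (i : Fin p) (βstar : Fin p → ℝ) (hβstar : βstar = Ω.mulVec (Pi.single i 1))
    (lam : ℝ) (hlam1 : 3 * matL1 Ω * matLinf (Shat - Ω⁻¹) ≤ lam)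
    (βhat : Fin p → ℝ)
    (hmin : ∀ β : Fin p → ℝ,
      scioObj Shat (Pi.single i 1) lam βhat ≤ scioObj Shat (Pi.single i 1) lam β)
    (h : Fin p → ℝ) (hh : h = βstar - βhat) :
    vecLinf h ≤ (1 / 3) * lam * vecL1 h + (4 / 3) * matL1 Ω * lam := by
  subst hh hβstar
  grw [scio_error_linf_via_l1_general hΩsym hΩpd.det_pos.ne'.isUnit hSsym hlam1 (.of_forall hmin)]
  rw [vecL1_single]
  norm_num
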